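/- For all n ≥ 3 and all natural numbers u, v, the number of π ∈ NC(n,3) with area(π) = u and leap(π) = v equals the number of parallelogram polyominoes P ∈ PP(n−2,3) with area(P) = u and bounce(P) = v. (The pair (area, leap) is a combinatorial interpretation of the q,t-Narayana polynomial N_{n,3}(q,t).) -/

import Mathlib

namespace QtN

/-! ### Lattice paths and parallelogram polyominoes -/

/-- A step of a lattice path: east or north. -/
inductive Step : Type
  | E : Step
  | N : Step
  deriving DecidableEq, Repr

/-- Number of east steps of a path. -/
def countE (w : List Step) : ℕ := w.count Step.E

/-- Number of north steps of a path. -/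
def countN (w : List Step) : ℕ := w.count Step.N

/-- Endpoint of a path started at the origin. -/
def pathPos (w : List Step) : ℕ × ℕ := (countE w, countN w)

/-- The set of lattice points visited by a path started at the origin. -/
def pathPts (w : List Step) : Finset (ℕ × ℕ) :=
  ((List.range (w.length + 1)).map (fun i => pathPos (w.take i))).toFinset

/-- `colHeightsAux w h`: for each east step of `w` (in order), the number of north
steps preceding it, starting with `h` north steps already performed. -/
def colHeightsAux : List Step → ℕ → List ℕ
  | [], _ => []
  | Step.E :: r, h => h :: colHeightsAux r h
  | Step.N :: r, h => colHeightsAux r (h + 1)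

/-- Height at which the path `w` crosses the vertical strip `i ≤ x ≤ i + 1`. -/
def colHeight (w : List Step) (i : ℕ) : ℕ := (colHeightsAux w 0).getD i 0

/-- A parallelogram polyomino of size `m × n`: a pair of monotone lattice paths from
`(0,0)` to `(m,n)` (east/north steps), the upper path staying weakly above the lower
path, and the two paths meeting only at `(0,0)` and `(m,n)`. -/
structure Polyomino (m n : ℕ) : Type where
  lower : List Step
  upper : List Step
  lowerE : countE lower = m
  lowerN : countN lower = n
  upperE : countE upper = m
  upperN : countN upper = n
  above : ∀ i < m, colHeight lower i ≤ colHeight upper i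
  meet : pathPts upper ∩ pathPts lower = {(0, 0), (m, n)}

/-- The area statistic: number of unit squares between the two paths,
minus `(m + n - 1)`. -/
def area {m n : ℕ} (P : Polyomino m n) : ℕ :=
  (∑ i ∈ Finset.range m, (colHeight P.upper i - colHeight P.lower i)) - (m + n - 1)

/-- Where an eastward run at height `y`, starting at `x`, first hits the lower path. -/
def eastTarget (hL : ℕ → ℕ) (m x y : ℕ) : ℕ :=
  ((List.range m).filter (fun i => decide (x ≤ i ∧ y ≤ hL i))).headD m

/-- Total bounce contribution: from state `(x, y)` just after the `j`-th east-to-north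
turn (counting the turns made so far), alternately go north until hitting the upper
path and east until hitting the lower path, each step contributing the number of
east-to-north turns preceding it. -/
def bounceAux (hU hL : ℕ → ℕ) (m n : ℕ) : ℕ → ℕ → ℕ → ℕ → ℕ
  | 0, _, _, _ => 0
  | fuel + 1, x, y, j =>
    if x = m ∧ y = n then 0
    else
      let y' := hU (x - 1)
      let x' := if y' = n then m else eastTarget hL m x y'
      (j + 1) * ((y' - y) + (x' - x)) + bounceAux hU hL m n fuel x' y' (j + 1)

/-- The bounce statistic of a parallelogram polyomino: the bounce path starts with a
single east step (contributing `0`) and then alternates north runs (to the ceiling)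
and east runs (to the floor); each step contributes the number of east-to-north turns
preceding it; finally `(m + n - 1)` is subtracted. -/
def bounce {m n : ℕ} (P : Polyomino m n) : ℕ :=
  bounceAux (colHeight P.upper) (colHeight P.lower) m n (m + n + 2) 1 0 0 - (m + n - 1)

/-! ### Set partitions and noncrossing partitions -/

/-- Maximum of a finite set of naturals (`0` for the empty set). -/
def fmax (β : Finset ℕ) : ℕ := β.sup id

/-- Minimum of a finite set of naturals (`0` for the empty set). -/
def fmin (β : Finset ℕ) : ℕ := if h : β.Nonempty then β.min' h else 0

/-- A set partition of `{1, …, n}`, given by its finite set of blocks. -/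
structure SetPartition (n : ℕ) : Type where
  blocks : Finset (Finset ℕ)
  not_empty_mem : ∅ ∉ blocks
  cover : ∀ i : ℕ, i ∈ Finset.Icc 1 n ↔ ∃ β ∈ blocks, i ∈ β
  disjoint : ∀ β ∈ blocks, ∀ γ ∈ blocks, β ≠ γ → Disjoint β γ

/-- A family of blocks is noncrossing if there are no `a < b < c < d` with
`a, c` in one block and `b, d` in a different block. -/
def IsNoncrossing (bs : Finset (Finset ℕ)) : Prop :=
  ∀ a b c d : ℕ, a < b → b < c → c < d →
    ∀ β ∈ bs, ∀ γ ∈ bs, a ∈ β → c ∈ β → b ∈ γ → d ∈ γ → β = γ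

/-- `NC n k`: noncrossing partitions of `{1, …, n}` with exactly `n - k + 1` blocks. -/
abbrev NC (n k : ℕ) : Type :=
  {P : SetPartition n // IsNoncrossing P.blocks ∧ P.blocks.card = n - k + 1}

/-- The skip statistic: `∑_{β} (max β - min β - |β| + 1)`. -/
def skip (bs : Finset (Finset ℕ)) : ℕ :=
  ∑ β ∈ bs, ((fmax β + 1 - fmin β) - β.card)

/-- The non-singleton blocks of a partition. -/
def nsBlocks (bs : Finset (Finset ℕ)) : Finset (Finset ℕ) :=
  bs.filter (fun β => 2 ≤ β.card)

/-- The block of `bs` containing `x` (junk if there is not exactly one). -/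
def blockContaining (bs : Finset (Finset ℕ)) (x : ℕ) : Finset ℕ :=
  (bs.filter (fun β => x ∈ β)).sup id

/-- For a noncrossing partition in `NC n 3`, the quadruple `(a, b, c, d)` describing its
non-singleton blocks: for two pair blocks `{a,b}` and `{c,d}` (with `a` the global
minimum) this is `(a, b, c, d)`; for a single triple block `{a, b, c}` (`a < b < c`)
this is `(a, b, b, c)`. -/
def blockQuad (bs : Finset (Finset ℕ)) : ℕ × ℕ × ℕ × ℕ :=
  let A := blockContaining (nsBlocks bs) (fmin ((nsBlocks bs).sup id))
  if (nsBlocks bs).card = 1 then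
    let l := A.sort (· ≤ ·)
    (l.getD 0 0, l.getD 1 0, l.getD 1 0, l.getD 2 0)
  else
    let B := ((nsBlocks bs).erase A).sup id
    (fmin A, fmax A, fmin B, fmax B)

/-- The leap statistic on `NC n 3`: `leap(ab|cd) = c - 2 + max(0, c - b)`,
and `leap({a,b,c}) = b - 2` (the case `b = c`). -/
def leap (bs : Finset (Finset ℕ)) : ℕ :=
  let (_, b, c, _) := blockQuad bs
  (c - 2) + (c - b)

/-- The skew statistic on `NC n 3`: `skew(ab|cd) = c - 2 + a` if `b < c`, else `c - 2`;
`skew({a,b,c}) = b - 2` (the case `b = c`). -/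
def skew (bs : Finset (Finset ℕ)) : ℕ :=
  let (a, b, c, _) := blockQuad bs
  if b < c then c - 2 + a else c - 2

/-- The mag statistic on `NC n 3`: `mag(ab|cd) = a + max(b, c) - 2 - ⌈(b - a)/2⌉`,
and `mag({a,b,c}) = a + b - 2 - ⌈(b - a)/2⌉` (the case `b = c`). -/
def mag (bs : Finset (Finset ℕ)) : ℕ :=
  let (a, b, c, _) := blockQuad bs
  a + max b c - 2 - (b - a + 1) / 2

/-- The area statistic on noncrossing partitions:
`area(π) = ∑_{β, β' ∈ π} #{ i ∈ β' : i < max β < max β' }` (ordered pairs of blocks). -/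
def ncArea (bs : Finset (Finset ℕ)) : ℕ :=
  ∑ β ∈ bs, ∑ γ ∈ bs, (γ.filter (fun i => i < fmax β ∧ fmax β < fmax γ)).card

/-- The elements of the non-singleton blocks, listed in increasing order, with
the middle element of a size-3 block listed twice. -/
def nsList (bs : Finset (Finset ℕ)) : List ℕ :=
  let l := ((nsBlocks bs).sup id).sort (· ≤ ·)
  if l.length = 3 then [l.getD 0 0, l.getD 1 0, l.getD 1 0, l.getD 2 0] else l

/-- The multiset of block sizes of a partition. -/
def blockSizes (bs : Finset (Finset ℕ)) : Multiset ℕ := bs.val.map Finset.card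

/-- The image of a partition of `{1, …, n}` under the flip `i ↦ n + 1 - i`. -/
def flipBlocks (n : ℕ) (bs : Finset (Finset ℕ)) : Finset (Finset ℕ) :=
  bs.image (fun β => β.image (fun i => n + 1 - i))

/-! ### The mingarc statistic -/

/-- The gaps `ν_r = m_{r+1} - m_r - 1` between consecutive block minima
`m_1 < ⋯ < m_h` (with `m_{h+1} = n + 1`). -/
def nuList (n : ℕ) (bs : Finset (Finset ℕ)) : List ℕ :=
  let ms := ((bs.image fmin).sort (· ≤ ·)) ++ [n + 1]
  (List.range (bs.image fmin).card).map (fun r => ms.getD (r + 1) 0 - ms.getD r 0 - 1)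

/-- Concatenation of `replicate ν c` over a list of pairs `(c, ν)`. -/
def repeatEach : List (ℕ × ℕ) → List ℕ
  | [] => []
  | p :: r => List.replicate p.2 p.1 ++ repeatEach r

/-- The right endpoints `y_1 ≤ ⋯ ≤ y_{k-1}`: each block maximum `c_r` repeated
`ν_r` times, in increasing order. -/
def ysList (n : ℕ) (bs : Finset (Finset ℕ)) : List ℕ :=
  repeatEach (List.zip ((bs.image fmax).sort (· ≤ ·)) (nuList n bs))

/-- The left endpoints `x_1 < ⋯ < x_{k-1}`: the elements of `{1, …, n}` that are not
block maxima, in increasing order. -/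
def xsList (n : ℕ) (bs : Finset (Finset ℕ)) : List ℕ :=
  ((Finset.Icc 1 n).filter (fun i => i ∉ bs.image fmax)).sort (· ≤ ·)

/-- Greedy left-to-right selection of arcs: keep the first arc, and thereafter keep the
earliest arc whose left endpoint exceeds the right endpoint of the last kept arc. -/
def greedyArcs : List (ℕ × ℕ) → Option ℕ → List (ℕ × ℕ)
  | [], _ => []
  | a :: rest, none => a :: greedyArcs rest (some a.2)
  | a :: rest, some r =>
      if r < a.1 then a :: greedyArcs rest (some a.2) else greedyArcs rest (some r)

/-- The mingarc statistic: the sum of `n - y_i` over the greedily selected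
candidate arcs `[x_i, y_i]`. -/
def mingarc (n : ℕ) (bs : Finset (Finset ℕ)) : ℕ :=
  ((greedyArcs (List.zip (xsList n bs) (ysList n bs)) none).map (fun p => n - p.2)).sum

/-! ### The map η from polyominoes to noncrossing partitions -/

/-- Largest column index `i < m` with `colHeight lower i ≤ j`: the rightmost cell
adjacent to the floor in row `j`. -/
def eFloor {m k : ℕ} (P : Polyomino m k) (j : ℕ) : ℕ :=
  (((List.range m).filter (fun i => decide (colHeight P.lower i ≤ j))).getLastD 0)

/-- Smallest column index `i` with `colHeight upper i ≥ j + 1`: the leftmost cell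
adjacent to the ceiling in row `j` (with default `m - 1`). -/
def fCeil {m k : ℕ} (P : Polyomino m k) (j : ℕ) : ℕ :=
  (((List.range m).filter (fun i => decide (j + 1 ≤ colHeight P.upper i))).headD (m - 1))

/-- The number of cells adjacent to the ceiling in row `j`. -/
def rowCount {m k : ℕ} (P : Polyomino m k) (j : ℕ) : ℕ :=
  fCeil P (j + 1) - fCeil P j + 1

/-- Pick, `cnt` times, the largest label in `{1, …, L}` not used yet. -/
def pickRow : ℕ → ℕ → Finset ℕ → Finset ℕ
  | 0, _, _ => ∅
  | cnt + 1, L, used =>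
      let x := fmax ((Finset.Icc 1 L) \ used)
      insert x (pickRow cnt L (insert x used))

/-- The blocks of `η(P)`: label the cells adjacent to the floor `1, …, n` going bottom
to top, left to right (the label of the floor cell in column `i`, row `j` is
`i + j + 1`, and the labels present in rows `≤ j` are exactly `1, …, eFloor P j + j + 1`);
then going bottom to top, left to right over the cells adjacent to the ceiling, assign
to each the largest unused indexing label occurring in the same row or below; the
blocks are the label sets of the ceiling rows. -/
def etaBlocks {m k : ℕ} (P : Polyomino m k) : Finset (Finset ℕ) :=
  (((List.range k).foldl
      (fun st j =>
        let B := pickRow (rowCount P j) (eFloor P j + j + 1) st.1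
        (st.1 ∪ B, B :: st.2))
      ((∅ : Finset ℕ), ([] : List (Finset ℕ)))).2).toFinset


/-! ### Parameter bijection -/

def NQ (n : ℕ) (t : ℕ × ℕ × ℕ × ℕ) : Prop :=
  1 ≤ t.1 ∧ ((t.1 < t.2.1 ∧ t.2.1 < t.2.2.1 ∧ t.2.2.1 < t.2.2.2 ∧ t.2.2.2 ≤ n) ∨
    (t.1 < t.2.2.1 ∧ t.2.2.1 < t.2.2.2 ∧ t.2.2.2 ≤ t.2.1 ∧ t.2.1 ≤ n))

def nArea (t : ℕ × ℕ × ℕ × ℕ) : ℕ :=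
  if t.2.1 < t.2.2.1 then t.2.1 + t.2.2.2 - t.1 - t.2.2.1 - 2
  else t.2.1 + t.2.2.2 - t.1 - t.2.2.1 - 3

def nLeap (t : ℕ × ℕ × ℕ × ℕ) : ℕ :=
  if t.2.1 < t.2.2.1 then 2 * t.2.2.1 - t.2.1 - 2 else t.2.2.1 - 2

def PQ (m : ℕ) (t : ℕ × ℕ × ℕ × ℕ) : Prop :=
  t.1 ≤ t.2.1 ∧ t.2.2.1 ≤ t.2.2.2 ∧ t.2.2.2 ≤ m ∧ t.1 < t.2.2.1 ∧ t.2.1 < t.2.2.2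

def pArea (t : ℕ × ℕ × ℕ × ℕ) : ℕ := t.2.2.1 + t.2.2.2 - t.1 - t.2.1 - 2

def pBounce (m : ℕ) (t : ℕ × ℕ × ℕ × ℕ) : ℕ :=
  if t.1 = 0 then (if t.2.1 = 0 then 0 else m + 1 - t.2.2.2)
  else if t.2.1 < t.2.2.1 then m + 2 - t.2.2.1 else 2 * m + 3 - t.2.2.1 - t.2.2.2

def fwd (m : ℕ) : ℕ × ℕ × ℕ × ℕ → ℕ × ℕ × ℕ × ℕ
  | (a, b, c, d) =>
    if b < c then
      (if b + 1 = c then (m + 3 - d, m + 2 - c, m + 3 - c, m + 1 - a)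
       else (m + 3 - d, m + 2 + a - c, m + 3 - c, m + 2 + b - c))
    else if c = 2 then (0, 0, d - 2, b - 2)
    else if a + 1 = c then (0, m + 3 - b, d - c, m + 3 - c)
    else if a + 2 = c then (0, m + 3 - d, b + 1 - c, m + 3 - c)
    else (m + 3 - b, m + 3 - d, m + 4 - c, m + 1 - a)

def bwd (m : ℕ) : ℕ × ℕ × ℕ × ℕ → ℕ × ℕ × ℕ × ℕ
  | (p, q, r, s) =>
    if p = 0 then
      (if q = 0 then (1, s + 2, 2, r + 2)
       else if r + q ≤ s then (m + 2 - s, m + 3 - q, m + 3 - s, r + (m + 3 - s))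
       else (m + 1 - s, r + (m + 2 - s), m + 3 - s, m + 3 - q))
    else if q < r then
      (if q + 1 = r then (m + 1 - s, m + 2 - r, m + 3 - r, m + 3 - p)
       else (m + 1 - s, m + 3 - p, m + 4 - r, m + 3 - q))
    else (q + 1 - r, s + 1 - r, m + 3 - r, m + 3 - p)

lemma fwd_ok (m : ℕ) (t) (h : NQ (m + 2) t) :
    PQ m (fwd m t) ∧ pArea (fwd m t) = nArea t ∧ pBounce m (fwd m t) = nLeap t ∧
      bwd m (fwd m t) = t := by
  obtain ⟨a, b, c, d⟩ := t
  simp only [NQ] at h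
  simp only [fwd]
  split_ifs <;> simp only [PQ, pArea, nArea, pBounce, nLeap, bwd] <;>
    refine ⟨by omega, ?_, ?_, ?_⟩ <;> split_ifs <;> (try simp only [Prod.mk.injEq]) <;> omega

lemma bwd_ok (m : ℕ) (t) (h : PQ m t) :
    NQ (m + 2) (bwd m t) ∧ fwd m (bwd m t) = t := by
  obtain ⟨p, q, r, s⟩ := t
  simp only [PQ] at h
  simp only [bwd]
  split_ifs <;> simp only [NQ, fwd] <;>
    refine ⟨by omega, ?_⟩ <;> split_ifs <;> (try simp only [Prod.mk.injEq]) <;> omega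

lemma param_card (m u v : ℕ) :
    Nat.card {t // NQ (m + 2) t ∧ nArea t = u ∧ nLeap t = v} =
    Nat.card {t // PQ m t ∧ pArea t = u ∧ pBounce m t = v} := by
  refine Nat.card_congr ⟨fun t => ⟨fwd m t.1, ?_⟩, fun t => ⟨bwd m t.1, ?_⟩, ?_, ?_⟩
  · obtain ⟨h1, h2, h3, h4⟩ := fwd_ok m t.1 t.2.1
    exact ⟨h1, h2.trans t.2.2.1, h3.trans t.2.2.2⟩
  · obtain ⟨h1, h2⟩ := bwd_ok m t.1 t.2.1
    obtain ⟨-, h4, h5, -⟩ := fwd_ok m _ h1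
    rw [h2] at h4 h5
    exact ⟨h1, h4 ▸ t.2.2.1, h5 ▸ t.2.2.2⟩
  · intro t
    exact Subtype.ext (fwd_ok m t.1 t.2.1).2.2.2
  · intro t
    exact Subtype.ext (bwd_ok m t.1 t.2.1).2

/-! ### Paths with three north steps -/

def rE (k : ℕ) (w : List Step) : List Step := List.replicate k Step.E ++ w

lemma rE_zero (w) : rE 0 w = w := rfl
lemma rE_succ (k w) : rE (k + 1) w = Step.E :: rE k w := rfl

def WW (m a b c : ℕ) : List Step :=
  rE a (Step.N :: rE (b - a) (Step.N :: rE (c - b) (Step.N :: rE (m - c) [])))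

lemma countE_rE (k w) : countE (rE k w) = k + countE w := by
  simp [countE, rE, List.count_append]
lemma countN_rE (k w) : countN (rE k w) = countN w := by
  simp [countN, rE, List.count_append, List.count_replicate]
lemma countE_N (w) : countE (Step.N :: w) = countE w := by simp [countE]
lemma countN_N (w) : countN (Step.N :: w) = countN w + 1 := by simp [countN]
lemma countE_E (w) : countE (Step.E :: w) = countE w + 1 := by simp [countE]
lemma countN_E (w) : countN (Step.E :: w) = countN w := by simp [countN]
lemma countE_nil : countE [] = 0 := by simp [countE]
lemma countN_nil : countN [] = 0 := by simp [countN]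

lemma countE_WW {m a b c : ℕ} (h1 : a ≤ b) (h2 : b ≤ c) (h3 : c ≤ m) :
    countE (WW m a b c) = m := by
  simp only [WW, countE_rE, countE_N, countE_nil]; omega
lemma countN_WW (m a b c : ℕ) : countN (WW m a b c) = 3 := by
  simp only [WW, countN_rE, countN_N, countN_nil]

lemma path_zero (w) (h : countN w = 0) : w = rE (countE w) [] := by
  induction w with
  | nil => simp [countE, rE]
  | cons s w ih =>
    cases s with
    | E => rw [countN_E] at h; rw [countE_E, rE_succ, ← ih h]
    | N => rw [countN_N] at h; omega

lemma path_succ (k w) (h : countN w = k + 1) :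
    ∃ a w', w = rE a (Step.N :: w') ∧ countN w' = k := by
  induction w with
  | nil => simp [countN_nil] at h
  | cons s w ih =>
    cases s with
    | E =>
      rw [countN_E] at h
      obtain ⟨a, w', rfl, h2⟩ := ih h
      exact ⟨a + 1, w', rfl, h2⟩
    | N => rw [countN_N] at h; exact ⟨0, w, rfl, by omega⟩

lemma path_exists (m w) (hE : countE w = m) (hN : countN w = 3) :
    ∃ a b c, a ≤ b ∧ b ≤ c ∧ c ≤ m ∧ w = WW m a b c := by
  obtain ⟨a, w1, rfl, g1⟩ := path_succ 2 w hN
  obtain ⟨b, w2, rfl, g2⟩ := path_succ 1 w1 g1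
  obtain ⟨c, w, rfl, h⟩ := path_succ 0 w2 g2
  rw [path_zero w h] at hE ⊢
  simp only [countE_rE, countE_N, countE_nil] at hE
  refine ⟨a, a + b, a + b + c, by omega, by omega, by omega, ?_⟩
  rw [WW, show a + b - a = b by omega, show a + b + c - (a + b) = c by omega,
    show m - (a + b + c) = countE w by omega]

def nx : List Step → ℕ → List ℕ
  | [], _ => []
  | Step.E :: r, h => nx r (h + 1)
  | Step.N :: r, h => h :: nx r h

lemma nx_rE (k w h) : nx (rE k w) h = nx w (h + k) := by
  induction k generalizing h with
  | zero => rfl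
  | succ k ih => rw [rE_succ, nx, ih]; congr 1; omega

lemma nx_WW {m a b c : ℕ} (h1 : a ≤ b) (h2 : b ≤ c) : nx (WW m a b c) 0 = [a, b, c] := by
  simp only [WW, nx_rE, nx]
  simp only [List.cons.injEq, and_true]
  omega

lemma cH_rE (k w h i) : (colHeightsAux (rE k w) h).getD i 0 =
    if i < k then h else (colHeightsAux w h).getD (i - k) 0 := by
  induction k generalizing i with
  | zero => simp [rE_zero]
  | succ k ih =>
    rw [rE_succ, colHeightsAux]
    cases i with
    | zero => simp
    | succ i => rw [List.getD_cons_succ, ih]; simp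

lemma colHeight_WW {m a b c i : ℕ} (h1 : a ≤ b) (h2 : b ≤ c) (h3 : c ≤ m) (hi : i < m) :
    colHeight (WW m a b c) i =
      (if a ≤ i then 1 else 0) + (if b ≤ i then 1 else 0) + (if c ≤ i then 1 else 0) := by
  simp only [colHeight, WW, cH_rE, colHeightsAux]
  split_ifs <;> omega

lemma pts_nil (x y) : (x, y) ∈ pathPts [] ↔ x = 0 ∧ y = 0 := by
  simp [pathPts, pathPos, countE, countN]

lemma mem_pts (w) (p) : p ∈ pathPts w ↔ ∃ i ≤ w.length, pathPos (w.take i) = p := by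
  simp [pathPts]

lemma pts_E (w x y) : (x, y) ∈ pathPts (Step.E :: w) ↔
    (x = 0 ∧ y = 0) ∨ (1 ≤ x ∧ (x - 1, y) ∈ pathPts w) := by
  simp only [mem_pts]
  constructor
  · rintro ⟨i, hi, h⟩
    cases i with
    | zero => left; simp [pathPos, countE_nil, countN_nil] at h; omega
    | succ i =>
      right
      simp only [List.take_succ_cons, pathPos, countE_E, countN_E, Prod.mk.injEq] at h
      refine ⟨by omega, i, by simpa using hi, ?_⟩
      simp only [pathPos, Prod.mk.injEq]; omega
  · rintro (⟨rfl, rfl⟩ | ⟨hx, i, hi, h⟩)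
    · exact ⟨0, by simp, by simp [pathPos, countE_nil, countN_nil]⟩
    · refine ⟨i + 1, by simpa using hi, ?_⟩
      simp only [List.take_succ_cons, pathPos, countE_E, countN_E, Prod.mk.injEq] at h ⊢
      omega

lemma pts_N (w x y) : (x, y) ∈ pathPts (Step.N :: w) ↔
    (x = 0 ∧ y = 0) ∨ (1 ≤ y ∧ (x, y - 1) ∈ pathPts w) := by
  simp only [mem_pts]
  constructor
  · rintro ⟨i, hi, h⟩
    cases i with
    | zero => left; simp [pathPos, countE_nil, countN_nil] at h; omega
    | succ i =>
      right
      simp only [List.take_succ_cons, pathPos, countE_N, countN_N, Prod.mk.injEq] at h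
      refine ⟨by omega, i, by simpa using hi, ?_⟩
      simp only [pathPos, Prod.mk.injEq]; omega
  · rintro (⟨rfl, rfl⟩ | ⟨hx, i, hi, h⟩)
    · exact ⟨0, by simp, by simp [pathPos, countE_nil, countN_nil]⟩
    · refine ⟨i + 1, by simpa using hi, ?_⟩
      simp only [List.take_succ_cons, pathPos, countE_N, countN_N, Prod.mk.injEq] at h ⊢
      omega

lemma pts_rE (k w x y) : (x, y) ∈ pathPts (rE k w) ↔
    (x < k ∧ y = 0) ∨ (k ≤ x ∧ (x - k, y) ∈ pathPts w) := by
  induction k generalizing x with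
  | zero => simp [rE_zero]
  | succ k ih =>
    rw [rE_succ, pts_E, ih, show x - 1 - k = x - (k + 1) by omega]
    generalize ((x - (k + 1), y) ∈ pathPts w) = A
    by_cases hP : A <;> simp only [hP, and_true, and_false, or_false] <;> omega

lemma pts_WW {m a b c : ℕ} (h1 : a ≤ b) (h2 : b ≤ c) (h3 : c ≤ m) (x y : ℕ) :
    (x, y) ∈ pathPts (WW m a b c) ↔ (y = 0 ∧ x ≤ a) ∨ (y = 1 ∧ a ≤ x ∧ x ≤ b) ∨
      (y = 2 ∧ b ≤ x ∧ x ≤ c) ∨ (y = 3 ∧ c ≤ x ∧ x ≤ m) := by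
  simp only [WW, pts_rE, pts_N, pts_nil]
  omega

lemma poly_cond {m a b c r s t : ℕ} (hm : 1 ≤ m) (h1 : a ≤ b) (h2 : b ≤ c) (h3 : c ≤ m)
    (k1 : r ≤ s) (k2 : s ≤ t) (k3 : t ≤ m) :
    ((∀ i < m, colHeight (WW m r s t) i ≤ colHeight (WW m a b c) i) ∧
      pathPts (WW m a b c) ∩ pathPts (WW m r s t) = {(0, 0), (m, 3)}) ↔
    a = 0 ∧ t = m ∧ b < r ∧ c < s := by
  constructor
  · rintro ⟨H, M⟩
    have H' : ∀ i < m, (if r ≤ i then 1 else 0) + (if s ≤ i then 1 else 0) + (if t ≤ i then 1 else 0)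
      ≤ (if a ≤ i then 1 else 0) + (if b ≤ i then 1 else 0) + (if c ≤ i then 1 else 0) := by
      intro i hi
      have := H i hi
      rwa [colHeight_WW k1 k2 k3 hi, colHeight_WW h1 h2 h3 hi] at this
    have M' : ∀ x y, ((x, y) ∈ pathPts (WW m a b c) ∧ (x, y) ∈ pathPts (WW m r s t)) →
        ((x = 0 ∧ y = 0) ∨ (x = m ∧ y = 3)) := by
      intro x y
      rw [← Finset.mem_inter, M]
      simp
    simp only [pts_WW h1 h2 h3, pts_WW k1 k2 k3] at M'
    have a1 := M' 1 0
    have a2 := H' 0 (by omega)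
    have a3 := M' (m - 1) 3
    have a4 := H' (m - 1) (by omega)
    have ha : a = 0 := by
      split_ifs at a2 <;> omega
    have ht : t = m := by
      split_ifs at a4 <;> omega
    have hbr : b < r := by
      by_contra hh
      have e1 := M' r 1
      omega
    have hcs : c < s := by
      by_contra hh
      have e1 := M' (max b s) 2
      have e2 := H' s
      by_cases hs : s < m
      · have e2 := e2 hs
        split_ifs at e2 <;> omega
      · omega
    exact ⟨ha, ht, hbr, hcs⟩
  · rintro ⟨rfl, rfl, hb, hc⟩
    constructor
    · intro i hi
      rw [colHeight_WW k1 k2 k3 hi, colHeight_WW h1 h2 h3 hi]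
      split_ifs <;> omega
    · ext ⟨x, y⟩
      rw [Finset.mem_inter, pts_WW h1 h2 h3, pts_WW k1 k2 k3]
      simp only [Finset.mem_insert, Finset.mem_singleton, Prod.mk.injEq]
      omega

lemma sum_step (m a : ℕ) (h : a ≤ m) :
    ∑ i ∈ Finset.range m, (if a ≤ i then 1 else 0) = m - a := by
  induction m with
  | zero => simp
  | succ m ih =>
    rw [Finset.sum_range_succ]
    rcases Nat.lt_or_ge m a with h' | h'
    · have : a = m + 1 := by omega
      subst this
      rw [Finset.sum_eq_zero]
      · simp
      · intro i hi
        simp only [Finset.mem_range] at hi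
        rw [if_neg (by omega)]
    · rw [ih h', if_pos h']; omega

lemma area_WW {m p q r s : ℕ} (h : PQ m (p, q, r, s)) :
    (∑ i ∈ Finset.range m, (colHeight (WW m 0 p q) i - colHeight (WW m r s m) i)) - (m + 3 - 1)
      = pArea (p, q, r, s) := by
  simp only [PQ] at h
  have e : ∑ i ∈ Finset.range m, (colHeight (WW m 0 p q) i - colHeight (WW m r s m) i)
      + ((m - r) + (m - s) + (m - m)) = (m - 0) + (m - p) + (m - q) := by
    rw [← sum_step m r (by omega), ← sum_step m s (by omega), ← sum_step m m le_rfl,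
      ← sum_step m 0 (by omega), ← sum_step m p (by omega), ← sum_step m q (by omega),
      ← Finset.sum_add_distrib, ← Finset.sum_add_distrib, ← Finset.sum_add_distrib,
      ← Finset.sum_add_distrib, ← Finset.sum_add_distrib]
    refine Finset.sum_congr rfl fun i hi => ?_
    simp only [Finset.mem_range] at hi
    rw [colHeight_WW (by omega) (by omega) (by omega) hi,
      colHeight_WW (by omega) (by omega) (by omega) hi]
    split_ifs <;> omega
  simp only [pArea]
  omega

lemma headD_filter (m : ℕ) (f : ℕ → Bool) (z : ℕ) (hz : z ≤ m) (h1 : ∀ i < z, f i = false)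
    (h2 : z < m → f z = true) : ((List.range m).filter f).headD m = z := by
  obtain ⟨k, rfl⟩ := Nat.exists_eq_add_of_le hz
  rw [List.range_add, List.filter_append,
    List.filter_eq_nil_iff.2 (by intro i hi; simp [h1 i (List.mem_range.1 hi)])]
  cases k with
  | zero => simp
  | succ k =>
    rw [List.range_succ_eq_map]
    simp [h2 (by omega)]

lemma bounce_WW {m p q r s : ℕ} (h : PQ m (p, q, r, s)) :
    bounceAux (colHeight (WW m 0 p q)) (colHeight (WW m r s m)) m 3 (m + 3 + 2) 1 0 0 - (m + 3 - 1)
      = pBounce m (p, q, r, s) := by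
  simp only [PQ] at h
  have hU : ∀ i, i < m → colHeight (WW m 0 p q) i =
      1 + (if p ≤ i then 1 else 0) + (if q ≤ i then 1 else 0) := by
    intro i hi
    rw [colHeight_WW (by omega) (by omega) (by omega) hi]; simp
  have hL : ∀ i, i < m → colHeight (WW m r s m) i =
      (if r ≤ i then 1 else 0) + (if s ≤ i then 1 else 0) := by
    intro i hi
    rw [colHeight_WW (by omega) (by omega) (by omega) hi, if_neg (show ¬ m ≤ i by omega)]; simp
  have T1 : eastTarget (colHeight (WW m r s m)) m 1 1 = r := by
    apply headD_filter _ _ _ (by omega)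
    · intro i hi
      rw [hL i (by omega)]
      simp only [decide_eq_false_iff_not]
      split_ifs <;> omega
    · intro hr
      rw [hL _ hr]
      simp only [decide_eq_true_eq]
      split_ifs <;> omega
  have T2 : ∀ x, x ≤ s → eastTarget (colHeight (WW m r s m)) m x 2 = s := by
    intro x hx
    apply headD_filter _ _ _ (by omega)
    · intro i hi
      rw [hL i (by omega)]
      simp only [decide_eq_false_iff_not]
      split_ifs <;> omega
    · intro hr
      rw [hL _ hr]
      simp only [decide_eq_true_eq]
      split_ifs <;> omega
  generalize colHeight (WW m 0 p q) = U at *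
  generalize colHeight (WW m r s m) = L at *
  have E : ∀ f j, bounceAux U L m 3 f m 3 j = 0 := by
    intro f j
    cases f <;> simp [bounceAux]
  have S : ∀ f x y j, y < 3 → bounceAux U L m 3 (f + 1) x y j =
      (j + 1) * ((U (x - 1) - y) + ((if U (x - 1) = 3 then m else eastTarget L m x (U (x - 1))) - x)) +
       bounceAux U L m 3 f (if U (x - 1) = 3 then m else eastTarget L m x (U (x - 1))) (U (x - 1)) (j + 1) := by
    intro f x y j hy
    rw [bounceAux, if_neg (by omega)]
  have E3 : ∀ f x y j, y < 3 → 1 ≤ x → x ≤ m → q < x →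
      bounceAux U L m 3 (f + 1) x y j = (j + 1) * (3 - y + (m - x)) := by
    intro f x y j hy h1 h2 h3
    have : U (x - 1) = 3 := by
      rw [hU _ (by omega), if_pos (by omega), if_pos (by omega)]
    rw [S _ _ _ _ hy, this, if_pos rfl, E, add_zero]
  have E2 : ∀ f x y j, y < 3 → 1 ≤ x → x ≤ q → p < x →
      bounceAux U L m 3 (f + 2) x y j = (j + 1) * (2 - y + (s - x)) + (j + 2) * (1 + (m - s)) := by
    intro f x y j hy h1 h2 h3
    have : U (x - 1) = 2 := by
      rw [hU _ (by omega), if_pos (by omega), if_neg (by omega)]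
    rw [S _ _ _ _ hy, this, if_neg (by omega), T2 _ (by omega),
      E3 _ _ _ _ (by omega) (by omega) (by omega) (by omega)]
  simp only [pBounce]
  by_cases hp : p = 0
  · rw [if_pos hp]
    by_cases hq : q = 0
    · rw [if_pos hq, show m + 3 + 2 = (m + 4) + 1 by omega,
        E3 _ _ _ _ (by omega) (by omega) (by omega) (by omega)]
      omega
    · rw [if_neg hq, show m + 3 + 2 = (m + 3) + 2 by omega,
        E2 _ _ _ _ (by omega) (by omega) (by omega) (by omega)]
      omega
  · rw [if_neg hp]
    have : U (1 - 1) = 1 := by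
      rw [hU _ (by omega), if_neg (by omega), if_neg (by omega)]
    rw [show m + 3 + 2 = (m + 4) + 1 by omega, S _ _ _ _ (by omega), this, if_neg (by omega), T1]
    by_cases hq : q < r
    · rw [if_pos hq, show m + 4 = (m + 3) + 1 by omega,
        E3 _ _ _ _ (by omega) (by omega) (by omega) (by omega)]
      omega
    · rw [if_neg hq, show m + 4 = (m + 2) + 2 by omega,
        E2 _ _ _ _ (by omega) (by omega) (by omega) (by omega)]
      omega

lemma poly_ext {m n : ℕ} {P Q : Polyomino m n} (h1 : P.lower = Q.lower) (h2 : P.upper = Q.upper) :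
    P = Q := by
  cases P; cases Q; simp_all

def mkPoly (m : ℕ) (hm : 1 ≤ m) (t : ℕ × ℕ × ℕ × ℕ) (h : PQ m t) : Polyomino m 3 where
  lower := WW m t.2.2.1 t.2.2.2 m
  upper := WW m 0 t.1 t.2.1
  lowerE := countE_WW h.2.1 h.2.2.1 le_rfl
  lowerN := countN_WW _ _ _ _
  upperE := countE_WW (by omega) h.1 (by unfold PQ at h; omega)
  upperN := countN_WW _ _ _ _
  above := ((poly_cond hm (by omega) h.1 (by unfold PQ at h; omega) h.2.1 h.2.2.1 le_rfl).2
    ⟨rfl, rfl, h.2.2.2.1, h.2.2.2.2⟩).1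
  meet := ((poly_cond hm (by omega) h.1 (by unfold PQ at h; omega) h.2.1 h.2.2.1 le_rfl).2
    ⟨rfl, rfl, h.2.2.2.1, h.2.2.2.2⟩).2

lemma area_mkPoly (m : ℕ) (hm : 1 ≤ m) (t) (h : PQ m t) : area (mkPoly m hm t h) = pArea t :=
  area_WW h

lemma bounce_mkPoly (m : ℕ) (hm : 1 ≤ m) (t) (h : PQ m t) :
    bounce (mkPoly m hm t h) = pBounce m t :=
  bounce_WW h

lemma mkPoly_inj (m : ℕ) (hm : 1 ≤ m) (t t') (h : PQ m t) (h' : PQ m t')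
    (e : mkPoly m hm t h = mkPoly m hm t' h') : t = t' := by
  have e1 : WW m t.2.2.1 t.2.2.2 m = WW m t'.2.2.1 t'.2.2.2 m := congrArg Polyomino.lower e
  have e2 : WW m 0 t.1 t.2.1 = WW m 0 t'.1 t'.2.1 := congrArg Polyomino.upper e
  have e3 : nx _ 0 = nx _ 0 := congrArg (fun w => nx w 0) e1
  have e4 : nx _ 0 = nx _ 0 := congrArg (fun w => nx w 0) e2
  rw [nx_WW h.2.1 h.2.2.1, nx_WW h'.2.1 h'.2.2.1] at e3
  rw [nx_WW (by omega) h.1, nx_WW (by omega) h'.1] at e4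
  simp only [List.cons.injEq] at e3 e4
  obtain ⟨p, q, r, s⟩ := t
  obtain ⟨p', q', r', s'⟩ := t'
  simp only [Prod.mk.injEq]
  tauto

lemma mkPoly_surj (m : ℕ) (hm : 1 ≤ m) (P : Polyomino m 3) : ∃ t h, mkPoly m hm t h = P := by
  obtain ⟨a, b, c, h1, h2, h3, hU⟩ := path_exists m P.upper P.upperE P.upperN
  obtain ⟨r, s, t, k1, k2, k3, hL⟩ := path_exists m P.lower P.lowerE P.lowerN
  have A := P.above
  have B := P.meet
  rw [hU, hL] at A B
  obtain ⟨rfl, rfl, g1, g2⟩ := (poly_cond hm h1 h2 h3 k1 k2 k3).1 ⟨A, B⟩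
  exact ⟨(b, c, r, s), ⟨h2, k1, k2, g1, g2⟩, poly_ext hL.symm hU.symm⟩

lemma poly_card (m u v : ℕ) (hm : 1 ≤ m) :
    Nat.card {t // PQ m t ∧ pArea t = u ∧ pBounce m t = v} =
    Nat.card {P : Polyomino m 3 // area P = u ∧ bounce P = v} := by
  refine Nat.card_congr (Equiv.ofBijective (fun t => ⟨mkPoly m hm t.1 t.2.1, ?_⟩) ⟨?_, ?_⟩)
  · exact ⟨(area_mkPoly ..).trans t.2.2.1, (bounce_mkPoly ..).trans t.2.2.2⟩
  · intro t t' e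
    exact Subtype.ext (mkPoly_inj m hm _ _ t.2.1 t'.2.1 (congrArg Subtype.val e))
  · rintro ⟨P, h1, h2⟩
    obtain ⟨t, h, rfl⟩ := mkPoly_surj m hm P
    exact ⟨⟨t, h, (area_mkPoly ..).symm.trans h1, (bounce_mkPoly ..).symm.trans h2⟩, rfl⟩

/-! ### Noncrossing partitions -/

lemma fmax_eq {β : Finset ℕ} {a : ℕ} (h : a ∈ β) (h' : ∀ x ∈ β, x ≤ a) : fmax β = a :=
  le_antisymm (Finset.sup_le h') (Finset.le_sup (f := id) h)

lemma fmax_mem {β : Finset ℕ} (h : β ≠ ∅) : fmax β ∈ β := by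
  have h := Finset.nonempty_iff_ne_empty.2 h
  have : fmax β = β.max' h :=
    fmax_eq (β.max'_mem h) (fun x hx => β.le_max' x hx)
  rw [this]; exact β.max'_mem h

lemma fmin_eq {β : Finset ℕ} {a : ℕ} (h : a ∈ β) (h' : ∀ x ∈ β, a ≤ x) : fmin β = a := by
  rw [fmin, dif_pos ⟨a, h⟩]
  exact le_antisymm (Finset.min'_le _ _ h) (Finset.le_min' _ _ _ h')

def mkB (n : ℕ) (S : Finset (Finset ℕ)) : Finset (Finset ℕ) :=
  S ∪ ((Finset.Icc 1 n).filter (fun i => ∀ β ∈ S, i ∉ β)).image (fun i => {i})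

lemma mem_mkB {n S β} : β ∈ mkB n S ↔ β ∈ S ∨ ∃ i, (1 ≤ i ∧ i ≤ n) ∧ (∀ γ ∈ S, i ∉ γ) ∧ β = {i} := by
  simp only [mkB, Finset.mem_union, Finset.mem_image, Finset.mem_filter, Finset.mem_Icc]
  constructor
  · rintro (h | ⟨i, ⟨h1, h2⟩, rfl⟩)
    · exact Or.inl h
    · exact Or.inr ⟨i, h1, h2, rfl⟩
  · rintro (h | ⟨i, h1, h2, rfl⟩)
    · exact Or.inl h
    · exact Or.inr ⟨i, ⟨h1, h2⟩, rfl⟩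

lemma blocks_eq_mkB {n} (P : SetPartition n) : P.blocks = mkB n (nsBlocks P.blocks) := by
  ext β
  rw [mem_mkB]
  constructor
  · intro h
    by_cases h2 : 2 ≤ β.card
    · left; exact Finset.mem_filter.2 ⟨h, h2⟩
    · right
      have h0 : β.card ≠ 0 := by
        intro h0
        rw [Finset.card_eq_zero] at h0
        exact P.not_empty_mem (h0 ▸ h)
      obtain ⟨i, rfl⟩ := Finset.card_eq_one.1 (show β.card = 1 by omega)
      refine ⟨i, Finset.mem_Icc.1 ((P.cover i).2 ⟨_, h, by simp⟩), ?_, rfl⟩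
      intro γ hγ hi
      obtain ⟨hγ, h3⟩ := Finset.mem_filter.1 hγ
      have := P.disjoint _ h _ hγ (by rintro rfl; exact h2 h3)
      exact (Finset.disjoint_left.1 this) (by simp) hi
  · rintro (h | ⟨i, hi, h, rfl⟩)
    · exact (Finset.mem_filter.1 h).1
    · obtain ⟨β, hβ, hiβ⟩ := (P.cover i).1 (Finset.mem_Icc.2 hi)
      have h2 : ¬ 2 ≤ β.card := fun h2 => h β (Finset.mem_filter.2 ⟨hβ, h2⟩) hiβ
      have h0 : 0 < β.card := Finset.card_pos.2 ⟨i, hiβ⟩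
      obtain ⟨j, rfl⟩ := Finset.card_eq_one.1 (show β.card = 1 by omega)
      rw [Finset.mem_singleton] at hiβ
      rwa [hiβ]

lemma ns_mkB {n S} (h : ∀ β ∈ S, 2 ≤ β.card) : nsBlocks (mkB n S) = S := by
  ext β
  rw [nsBlocks, Finset.mem_filter, mem_mkB]
  constructor
  · rintro ⟨h1 | ⟨i, _, _, rfl⟩, h2⟩
    · exact h1
    · simp at h2
  · intro h1; exact ⟨Or.inl h1, h _ h1⟩

lemma sp_ext {n} {P Q : SetPartition n} (h : P.blocks = Q.blocks) : P = Q := by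
  cases P; cases Q; simp_all

def mkSP (n : ℕ) (S : Finset (Finset ℕ)) (h2 : ∀ β ∈ S, 2 ≤ β.card)
    (hI : ∀ β ∈ S, ∀ i ∈ β, 1 ≤ i ∧ i ≤ n)
    (hd : ∀ β ∈ S, ∀ γ ∈ S, β ≠ γ → Disjoint β γ) : SetPartition n where
  blocks := mkB n S
  not_empty_mem := by
    rw [mem_mkB]
    rintro (h | ⟨i, _, _, h⟩)
    · simpa using h2 _ h
    · exact (Finset.singleton_ne_empty i) h.symm
  cover := by
    intro i
    rw [Finset.mem_Icc]
    constructor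
    · intro hi
      by_cases h : ∀ γ ∈ S, i ∉ γ
      · exact ⟨{i}, mem_mkB.2 (Or.inr ⟨i, hi, h, rfl⟩), by simp⟩
      · push Not at h
        obtain ⟨γ, h1, h2⟩ := h
        exact ⟨γ, mem_mkB.2 (Or.inl h1), h2⟩
    · rintro ⟨β, h, hi⟩
      rcases mem_mkB.1 h with h | ⟨j, hj, _, rfl⟩
      · exact hI _ h _ hi
      · rw [Finset.mem_singleton] at hi; rwa [hi]
  disjoint := by
    intro β hβ γ hγ hne
    rcases mem_mkB.1 hβ with hb | ⟨i, _, hi, rfl⟩ <;> rcases mem_mkB.1 hγ with hg | ⟨j, _, hj, rfl⟩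
    · exact hd _ hb _ hg hne
    · exact Finset.disjoint_singleton_right.2 (hj _ hb)
    · exact Finset.disjoint_singleton_left.2 (hi _ hg)
    · rw [Finset.disjoint_singleton_left, Finset.mem_singleton]
      rintro rfl; exact hne rfl

def nsS (t : ℕ × ℕ × ℕ × ℕ) : Finset (Finset ℕ) :=
  if t.2.1 = t.2.2.2 then {{t.1, t.2.2.1, t.2.1}} else {{t.1, t.2.1}, {t.2.2.1, t.2.2.2}}

lemma mem_nsS {a b c d : ℕ} {β} : β ∈ nsS (a, b, c, d) ↔
    (b = d ∧ β = {a, c, b}) ∨ (b ≠ d ∧ (β = {a, b} ∨ β = {c, d})) := by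
  unfold nsS
  split_ifs with h <;> simp_all

lemma nsS_card {n t} (h : NQ n t) : ∀ β ∈ nsS t, 2 ≤ β.card := by
  obtain ⟨a, b, c, d⟩ := t
  simp only [NQ] at h
  intro β hβ
  rcases mem_nsS.1 hβ with ⟨rfl, rfl⟩ | ⟨hne, rfl | rfl⟩
  · rw [Finset.card_insert_of_notMem (by simp; omega), Finset.card_pair (by omega)]; omega
  · rw [Finset.card_pair (by omega)]
  · rw [Finset.card_pair (by omega)]

lemma nsS_Icc {n t} (h : NQ n t) : ∀ β ∈ nsS t, ∀ i ∈ β, 1 ≤ i ∧ i ≤ n := by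
  obtain ⟨a, b, c, d⟩ := t
  simp only [NQ] at h
  intro β hβ i hi
  rcases mem_nsS.1 hβ with ⟨rfl, rfl⟩ | ⟨hne, rfl | rfl⟩ <;> simp at hi <;> omega

lemma nsS_disj {n t} (h : NQ n t) : ∀ β ∈ nsS t, ∀ γ ∈ nsS t, β ≠ γ → Disjoint β γ := by
  obtain ⟨a, b, c, d⟩ := t
  simp only [NQ] at h
  intro β hβ γ hγ hne
  rw [Finset.disjoint_left]
  intro x hx hx'
  rcases mem_nsS.1 hβ with ⟨_, rfl⟩ | ⟨_, rfl | rfl⟩ <;>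
  rcases mem_nsS.1 hγ with ⟨_, rfl⟩ | ⟨_, rfl | rfl⟩ <;> first
    | exact hne rfl
    | (simp at hx hx'; omega)

lemma nsS_nc {n t} (h : NQ n t) : IsNoncrossing (mkB n (nsS t)) := by
  obtain ⟨a, b, c, d⟩ := t
  simp only [NQ] at h
  intro w x y z h1 h2 h3 β hβ γ hγ hw hy hx hz
  rw [mem_mkB] at hβ hγ
  rcases hβ with hβ | ⟨i, _, _, rfl⟩
  · rcases hγ with hγ | ⟨i, _, _, rfl⟩
    · rcases mem_nsS.1 hβ with ⟨_, rfl⟩ | ⟨_, rfl | rfl⟩ <;>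
      rcases mem_nsS.1 hγ with ⟨_, rfl⟩ | ⟨_, rfl | rfl⟩ <;> first
        | rfl
        | (simp at hw hx hy hz; omega)
    · simp at hx hz; omega
  · simp at hw hy; omega

def suppS (t : ℕ × ℕ × ℕ × ℕ) : Finset ℕ := {t.1, t.2.1, t.2.2.1, t.2.2.2}

lemma mkB_card {m t} (h : NQ (m + 2) t) : (mkB (m + 2) (nsS t)).card = m := by
  have hdis : Disjoint (nsS t) (((Finset.Icc 1 (m + 2)).filter
      (fun i => ∀ β ∈ nsS t, i ∉ β)).image (fun i => ({i} : Finset ℕ))) := by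
    rw [Finset.disjoint_left]
    intro β hβ hβ'
    obtain ⟨i, _, rfl⟩ := Finset.mem_image.1 hβ'
    simpa using nsS_card h _ hβ
  have hf : (Finset.Icc 1 (m + 2)).filter (fun i => ∀ β ∈ nsS t, i ∉ β) =
      Finset.Icc 1 (m + 2) \ suppS t := by
    ext i
    rw [Finset.mem_filter, Finset.mem_sdiff]
    refine and_congr_right fun _ => ?_
    obtain ⟨a, b, c, d⟩ := t
    by_cases hbd : b = d
    · simp [nsS, suppS, hbd]; try tauto
    · simp [nsS, suppS, hbd]; try tauto
  have hsub : suppS t ⊆ Finset.Icc 1 (m + 2) := by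
    obtain ⟨a, b, c, d⟩ := t
    simp only [NQ] at h
    intro i hi
    simp only [suppS, Finset.mem_insert, Finset.mem_singleton] at hi
    rw [Finset.mem_Icc]; omega
  have hle := Finset.card_le_card hsub
  rw [mkB, Finset.card_union_of_disjoint hdis,
    Finset.card_image_of_injective _ Finset.singleton_injective, hf, Finset.card_sdiff_of_subset hsub]
  rw [Nat.card_Icc] at hle ⊢
  obtain ⟨a, b, c, d⟩ := t
  simp only [NQ] at h
  by_cases hbd : b = d
  · subst hbd
    have e : (suppS (a, b, c, b)).card = 3 := by
      rw [show suppS (a, b, c, b) = {a, c, b} by ext i; simp only [suppS, Finset.mem_insert, Finset.mem_singleton]; tauto]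
      rw [Finset.card_insert_of_notMem (by simp; omega), Finset.card_pair (by omega)]
    rw [e] at hle ⊢
    simp [nsS]; omega
  · have e : (suppS (a, b, c, d)).card = 4 := by
      rw [suppS, Finset.card_insert_of_notMem (by simp; omega),
        Finset.card_insert_of_notMem (by simp; omega), Finset.card_pair (by simp only; omega)]
    rw [e] at hle ⊢
    have : (nsS (a, b, c, d)).card = 2 := by
      simp only [nsS, hbd, if_false]
      rw [Finset.card_pair]
      intro e
      have : a ∈ ({c, d} : Finset ℕ) := e ▸ (by simp)
      simp at this; omega
    omega

def toQuad (t : ℕ × ℕ × ℕ × ℕ) : ℕ × ℕ × ℕ × ℕ :=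
  if t.2.1 = t.2.2.2 then (t.1, t.2.2.1, t.2.2.1, t.2.1) else t

lemma blockQuad_mkB {n t} (h : NQ n t) : blockQuad (mkB n (nsS t)) = toQuad t := by
  have h2 := ns_mkB (n := n) (nsS_card h)
  unfold blockQuad
  rw [h2]
  obtain ⟨a, b, c, d⟩ := t
  simp only [NQ] at h
  by_cases hbd : b = d
  · subst hbd
    have e : nsS (a, b, c, b) = {{a, c, b}} := by simp [nsS]
    have e1 : fmin ({a, c, b} : Finset ℕ) = a := fmin_eq (by simp) (by simp; omega)
    have e2 : blockContaining {{a, c, b}} a = {a, c, b} := by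
      rw [blockContaining, Finset.filter_true_of_mem (by simp)]; simp
    have e3 : Finset.sort ({a, c, b} : Finset ℕ) (· ≤ ·) = [a, c, b] := by
      rw [Finset.sort_insert, Finset.sort_insert, Finset.sort_singleton]
      all_goals simp
      all_goals omega
    simp only [e, Finset.card_singleton, Finset.sup_singleton, id, e1, e2, e3]
    simp [toQuad]
  · have e : nsS (a, b, c, d) = {{a, b}, {c, d}} := by simp [nsS, hbd]
    have hne : ({a, b} : Finset ℕ) ≠ {c, d} := by
      intro e
      have : a ∈ ({c, d} : Finset ℕ) := e ▸ (by simp)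
      simp at this; omega
    have e0 : ({{a, b}, {c, d}} : Finset (Finset ℕ)).sup id = {a, b, c, d} := by
      ext i; simp; tauto
    have e1 : fmin ({a, b, c, d} : Finset ℕ) = a := fmin_eq (by simp) (by simp; omega)
    have e2 : blockContaining {{a, b}, {c, d}} a = {a, b} := by
      rw [blockContaining, Finset.filter_insert, Finset.filter_singleton, if_pos (by simp),
        if_neg (by simp; omega)]
      simp
    have e3 : ({{a, b}, {c, d}} : Finset (Finset ℕ)).erase {a, b} = {{c, d}} :=
      Finset.erase_insert (by simpa using hne)
    simp only [e, Finset.card_pair hne, e0, e1, e2, e3, Finset.sup_singleton, id]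
    rw [if_neg (by omega), toQuad, if_neg hbd,
      fmin_eq (a := a) (by simp) (by simp; omega), fmax_eq (a := b) (by simp) (by simp; omega),
      fmin_eq (a := c) (by simp) (by simp; omega), fmax_eq (a := d) (by simp) (by simp; omega)]

lemma leap_mkB {n t} (h : NQ n t) : leap (mkB n (nsS t)) = nLeap t := by
  unfold leap
  rw [blockQuad_mkB h]
  obtain ⟨a, b, c, d⟩ := t
  simp only [NQ] at h
  simp only [toQuad, nLeap]
  split_ifs <;> simp only <;> omega

lemma fmax_image {n t} (h : NQ n t) :
    (mkB n (nsS t)).image fmax = Finset.Icc 1 n \ {t.1, t.2.2.1} := by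
  obtain ⟨a, b, c, d⟩ := t
  simp only [NQ] at h
  have m1 : b = d → fmax {a, c, b} = b := fun _ => fmax_eq (by simp) (by simp; omega)
  have m2 : fmax {a, b} = b := fmax_eq (by simp) (by simp; omega)
  have m3 : fmax {c, d} = d := fmax_eq (by simp) (by simp; omega)
  have m4 : ∀ i, fmax {i} = i := fun i => fmax_eq (by simp) (by simp)
  ext x
  simp only [Finset.mem_image, Finset.mem_sdiff, Finset.mem_Icc, Finset.mem_insert,
    Finset.mem_singleton, mem_mkB, mem_nsS]
  constructor
  · rintro ⟨β, (⟨h1, rfl⟩ | ⟨h1, rfl | rfl⟩) | ⟨i, hi, hi', rfl⟩, rfl⟩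
    · rw [m1 h1]; omega
    · rw [m2]; omega
    · rw [m3]; omega
    · rw [m4]
      by_cases hbd : b = d
      · have := hi' _ (Or.inl ⟨hbd, rfl⟩)
        simp at this; omega
      · have t1 := hi' _ (Or.inr ⟨hbd, Or.inl rfl⟩)
        have t2 := hi' _ (Or.inr ⟨hbd, Or.inr rfl⟩)
        simp at t1 t2; omega
  · rintro ⟨h1, h2⟩
    by_cases hb : x = b
    · subst hb
      by_cases hbd : x = d
      · exact ⟨_, Or.inl (Or.inl ⟨hbd, rfl⟩), m1 hbd⟩
      · exact ⟨_, Or.inl (Or.inr ⟨hbd, Or.inl rfl⟩), m2⟩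
    · by_cases hd : x = d
      · subst hd
        exact ⟨_, Or.inl (Or.inr ⟨Ne.symm hb, Or.inr rfl⟩), m3⟩
      · refine ⟨{x}, Or.inr ⟨x, h1, ?_, rfl⟩, m4 x⟩
        rintro γ (⟨_, rfl⟩ | ⟨_, rfl | rfl⟩) <;> simp <;> omega

lemma filt_card (M : Finset ℕ) (i j : ℕ) :
    ∑ x ∈ M, (if i < x ∧ x < j then 1 else 0) = (M.filter (fun x => i < x ∧ x < j)).card := by
  rw [Finset.card_filter]

lemma cnt1 {n a c i j : ℕ} (hi : 1 ≤ i) (hj : j ≤ n) (ha : ¬ (i < a ∧ a < j))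
    (hc : ¬ (i < c ∧ c < j)) :
    ((Finset.Icc 1 n \ {a, c}).filter (fun x => i < x ∧ x < j)).card = j - i - 1 := by
  rw [← Nat.card_Ioo]
  congr 1
  ext x
  simp only [Finset.mem_filter, Finset.mem_sdiff, Finset.mem_Icc, Finset.mem_insert,
    Finset.mem_singleton, Finset.mem_Ioo]
  omega

lemma cnt2 {n a c i j : ℕ} (hi : 1 ≤ i) (hj : j ≤ n) (ha : ¬ (i < a ∧ a < j))
    (hc : i < c ∧ c < j) :
    ((Finset.Icc 1 n \ {a, c}).filter (fun x => i < x ∧ x < j)).card = j - i - 1 - 1 := by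
  rw [← Nat.card_Ioo i j, ← Finset.card_erase_of_mem (Finset.mem_Ioo.2 hc)]
  congr 1
  ext x
  simp only [Finset.mem_filter, Finset.mem_sdiff, Finset.mem_Icc, Finset.mem_insert,
    Finset.mem_singleton, Finset.mem_Ioo, Finset.mem_erase]
  omega

lemma ncArea_mkB {n t} (h : NQ n t) : ncArea (mkB n (nsS t)) = nArea t := by
  have hinj : Set.InjOn fmax (mkB n (nsS t) : Set (Finset ℕ)) := by
    intro β hβ γ hγ e
    let P := mkSP n (nsS t) (nsS_card h) (nsS_Icc h) (nsS_disj h)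
    by_contra hne
    have hd := P.disjoint β hβ γ hγ hne
    have b0 : β ≠ ∅ := by rintro rfl; exact P.not_empty_mem hβ
    have g0 : γ ≠ ∅ := by rintro rfl; exact P.not_empty_mem hγ
    exact Finset.disjoint_left.1 hd (fmax_mem b0) (e ▸ fmax_mem g0)
  have key : ncArea (mkB n (nsS t)) = ∑ γ ∈ mkB n (nsS t), ∑ x ∈ Finset.Icc 1 n \ {t.1, t.2.2.1},
      (γ.filter (fun i => i < x ∧ x < fmax γ)).card := by
    rw [ncArea, Finset.sum_comm]
    refine Finset.sum_congr rfl fun γ _ => ?_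
    rw [← fmax_image h, Finset.sum_image hinj]
  have key2 : ncArea (mkB n (nsS t)) = ∑ γ ∈ nsS t, ∑ x ∈ Finset.Icc 1 n \ {t.1, t.2.2.1},
      (γ.filter (fun i => i < x ∧ x < fmax γ)).card := by
    rw [key]
    symm
    apply Finset.sum_subset
    · intro β hβ; exact mem_mkB.2 (Or.inl hβ)
    · intro γ hγ hγ'
      rcases mem_mkB.1 hγ with h1 | ⟨i, _, _, rfl⟩
      · exact absurd h1 hγ'
      · apply Finset.sum_eq_zero
        intro x _
        rw [fmax_eq (a := i) (by simp) (by simp), Finset.card_eq_zero,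
          Finset.filter_eq_empty_iff]
        intro y hy
        rw [Finset.mem_singleton] at hy; omega
  rw [key2]
  obtain ⟨a, b, c, d⟩ := t
  simp only [NQ] at h
  have pair : ∀ i j : ℕ, i < j → ∀ M : Finset ℕ,
      ∑ x ∈ M, ((({i, j} : Finset ℕ)).filter (fun y => y < x ∧ x < fmax {i, j})).card =
      (M.filter (fun x => i < x ∧ x < j)).card := by
    intro i j hij M
    rw [← filt_card]
    refine Finset.sum_congr rfl fun x _ => ?_
    rw [fmax_eq (a := j) (by simp) (by simp; omega), Finset.card_filter,
      Finset.sum_pair (by omega)]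
    split_ifs <;> omega
  by_cases hbd : b = d
  · subst hbd
    have e : nsS (a, b, c, b) = {{a, c, b}} := by simp [nsS]
    rw [e, Finset.sum_singleton]
    have : ∑ x ∈ Finset.Icc 1 n \ {a, c},
        ((({a, c, b} : Finset ℕ)).filter (fun y => y < x ∧ x < fmax {a, c, b})).card =
        ((Finset.Icc 1 n \ {a, c}).filter (fun x => a < x ∧ x < b)).card +
        ((Finset.Icc 1 n \ {a, c}).filter (fun x => c < x ∧ x < b)).card := by
      rw [← filt_card, ← filt_card, ← Finset.sum_add_distrib]
      refine Finset.sum_congr rfl fun x _ => ?_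
      rw [fmax_eq (a := b) (by simp) (by simp; omega), Finset.card_filter,
        Finset.sum_insert (by simp; omega), Finset.sum_pair (by omega)]
      split_ifs <;> omega
    refine this.trans ?_
    rw [cnt2 (by omega) (by omega) (by omega) (by omega),
      cnt1 (by omega) (by omega) (by omega) (by omega)]
    simp only [nArea]
    split_ifs <;> omega
  · have e : nsS (a, b, c, d) = {{a, b}, {c, d}} := by simp [nsS, hbd]
    have hne : ({a, b} : Finset ℕ) ≠ {c, d} := by
      intro e
      have : a ∈ ({c, d} : Finset ℕ) := e ▸ (by simp)
      simp at this; omega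
    rw [e, Finset.sum_pair hne, pair _ _ (by omega), pair _ _ (by omega)]
    simp only [nArea]
    split_ifs with hbc
    · rw [cnt1 (by omega) (by omega) (by omega) (by omega),
        cnt1 (by omega) (by omega) (by omega) (by omega)]
      omega
    · rw [cnt2 (by omega) (by omega) (by omega) (by omega),
        cnt1 (by omega) (by omega) (by omega) (by omega)]
      omega

lemma pair_sort {A : Finset ℕ} (h : A.card = 2) : ∃ a b, a < b ∧ A = {a, b} := by
  obtain ⟨x, y, hne, rfl⟩ := Finset.card_eq_two.1 h
  rcases lt_or_gt_of_ne hne with h | h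
  · exact ⟨x, y, h, rfl⟩
  · exact ⟨y, x, h, Finset.pair_comm _ _⟩

lemma triple_sort {A : Finset ℕ} (h : A.card = 3) : ∃ a c b, a < c ∧ c < b ∧ A = {a, c, b} := by
  have hA : A.Nonempty := Finset.card_pos.1 (by omega)
  have hm := A.min'_mem hA
  obtain ⟨c, b, hcb, e⟩ := pair_sort (A := A.erase (A.min' hA))
    (by rw [Finset.card_erase_of_mem hm, h])
  have hc : c ∈ A.erase (A.min' hA) := by rw [e]; simp
  refine ⟨A.min' hA, c, b, A.min'_lt_of_mem_erase_min' hA hc, hcb, ?_⟩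
  rw [← e, Finset.insert_erase hm]

lemma ns_sum {m : ℕ} (P : SetPartition (m + 2)) (h : P.blocks.card = m) :
    ∑ β ∈ nsBlocks P.blocks, (β.card - 1) = 2 := by
  have e1 : ∑ β ∈ P.blocks, β.card = m + 2 := by
    have : P.blocks.biUnion id = Finset.Icc 1 (m + 2) := by
      ext i
      rw [P.cover i]; simp
    have h2 := Finset.card_biUnion (s := P.blocks) (t := id)
      (fun β hβ γ hγ hne => P.disjoint β hβ γ hγ hne)
    rw [this, Nat.card_Icc] at h2
    simp only [id] at h2
    omega
  have pos : ∀ β ∈ P.blocks, 1 ≤ β.card := by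
    intro β hβ
    apply Finset.card_pos.2
    rw [Finset.nonempty_iff_ne_empty]
    rintro rfl
    exact P.not_empty_mem hβ
  have e2 : ∑ β ∈ P.blocks, β.card = ∑ β ∈ P.blocks, (β.card - 1) + P.blocks.card := by
    rw [Finset.card_eq_sum_ones, ← Finset.sum_add_distrib]
    refine Finset.sum_congr rfl fun β hβ => ?_
    have := pos β hβ
    omega
  have e3 : ∑ β ∈ nsBlocks P.blocks, (β.card - 1) = ∑ β ∈ P.blocks, (β.card - 1) := by
    apply Finset.sum_subset (Finset.filter_subset _ _)
    intro β hβ hβ'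
    have : ¬ 2 ≤ β.card := fun h2 => hβ' (Finset.mem_filter.2 ⟨hβ, h2⟩)
    omega
  omega

lemma ns_exists {m : ℕ} (P : SetPartition (m + 2)) (hN : IsNoncrossing P.blocks)
    (h : P.blocks.card = m) : ∃ t, NQ (m + 2) t ∧ nsBlocks P.blocks = nsS t := by
  have hs := ns_sum P h
  have hge : ∀ β ∈ nsBlocks P.blocks, 2 ≤ β.card := fun β hβ => (Finset.mem_filter.1 hβ).2
  have hmem : ∀ β ∈ nsBlocks P.blocks, β ∈ P.blocks := fun β hβ => (Finset.mem_filter.1 hβ).1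
  have hr : ∀ β ∈ nsBlocks P.blocks, ∀ i ∈ β, 1 ≤ i ∧ i ≤ m + 2 := fun β hβ i hi =>
    Finset.mem_Icc.1 ((P.cover i).2 ⟨β, hmem β hβ, hi⟩)
  have hle : (nsBlocks P.blocks).card ≤ 2 := by
    refine le_trans ?_ hs.le
    rw [Finset.card_eq_sum_ones]
    refine Finset.sum_le_sum fun β hβ => ?_
    have := hge β hβ
    omega
  have h0 : (nsBlocks P.blocks).card ≠ 0 := by
    intro h0
    rw [Finset.card_eq_zero] at h0
    rw [h0] at hs
    simp at hs
  rcases (show (nsBlocks P.blocks).card = 1 ∨ (nsBlocks P.blocks).card = 2 by omega) with h1 | h1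
  · obtain ⟨A, hA⟩ := Finset.card_eq_one.1 h1
    rw [hA] at hs hr ⊢
    rw [Finset.sum_singleton] at hs
    obtain ⟨a, c, b, hac, hcb, rfl⟩ := triple_sort (show A.card = 3 by omega)
    have r1 := hr _ (Finset.mem_singleton_self _) a (by simp)
    have r2 := hr _ (Finset.mem_singleton_self _) b (by simp)
    refine ⟨(a, b, c, b), ?_, ?_⟩
    · simp only [NQ]; omega
    · simp [nsS]
  · obtain ⟨A, B, hAB, hE⟩ := Finset.card_eq_two.1 h1
    rw [hE, Finset.sum_pair hAB] at hs
    have mA : A ∈ nsBlocks P.blocks := by rw [hE]; simp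
    have mB : B ∈ nsBlocks P.blocks := by rw [hE]; simp
    have cA := hge A mA
    have cB := hge B mB
    have main : ∀ x y z w : ℕ, x < y → z < w → x < z → {x, y} ∈ nsBlocks P.blocks →
        {z, w} ∈ nsBlocks P.blocks → ({x, y} : Finset ℕ) ≠ {z, w} →
        nsBlocks P.blocks = {{x, y}, {z, w}} →
        ∃ t, NQ (m + 2) t ∧ nsBlocks P.blocks = nsS t := by
      intro x y z w hxy hzw hxz m1 m2 hne e
      have dj := P.disjoint _ (hmem _ m1) _ (hmem _ m2) hne
      have d1 : y ∉ ({z, w} : Finset ℕ) := Finset.disjoint_left.1 dj (by simp)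
      simp only [Finset.mem_insert, Finset.mem_singleton] at d1
      have nc : ¬ (z < y ∧ y < w) := by
        rintro ⟨n1, n2⟩
        exact hne (hN x z y w hxz n1 n2 _ (hmem _ m1) _ (hmem _ m2) (by simp) (by simp) (by simp)
          (by simp))
      have r1 := hr _ m1 x (by simp)
      have r2 := hr _ m1 y (by simp)
      have r3 := hr _ m2 w (by simp)
      refine ⟨(x, y, z, w), ?_, ?_⟩
      · simp only [NQ]; omega
      · rw [e, nsS, if_neg]
        simp only; omega
    obtain ⟨x, y, hxy, rfl⟩ := pair_sort (show A.card = 2 by omega)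
    obtain ⟨z, w, hzw, rfl⟩ := pair_sort (show B.card = 2 by omega)
    have hxz : x ≠ z := by
      rintro rfl
      have dj := P.disjoint _ (hmem _ mA) _ (hmem _ mB) hAB
      exact Finset.disjoint_left.1 dj (Finset.mem_insert_self x _) (by simp)
    rcases lt_or_gt_of_ne hxz with hlt | hlt
    · exact main x y z w hxy hzw hlt mA mB hAB hE
    · exact main z w x y hzw hxy hlt mB mA hAB.symm (by rw [hE, Finset.pair_comm])

lemma toQuad_inj {n t t'} (h : NQ n t) (h' : NQ n t') (e : toQuad t = toQuad t') : t = t' := by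
  obtain ⟨a, b, c, d⟩ := t
  obtain ⟨a', b', c', d'⟩ := t'
  simp only [NQ] at h h'
  simp only [toQuad] at e
  split_ifs at e <;> simp only [Prod.mk.injEq] at e ⊢ <;> omega

def mkNC (m : ℕ) (hm : 1 ≤ m) (t) (h : NQ (m + 2) t) : NC (m + 2) 3 :=
  ⟨mkSP (m + 2) (nsS t) (nsS_card h) (nsS_Icc h) (nsS_disj h), nsS_nc h,
    (mkB_card h).trans (by omega)⟩

lemma mkNC_blocks (m hm t h) : (mkNC m hm t h).val.blocks = mkB (m + 2) (nsS t) := rfl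

lemma nc_card (m u v : ℕ) (hm : 1 ≤ m) :
    Nat.card {π : NC (m + 2) 3 // ncArea π.val.blocks = u ∧ leap π.val.blocks = v} =
    Nat.card {t // NQ (m + 2) t ∧ nArea t = u ∧ nLeap t = v} := by
  symm
  refine Nat.card_congr (Equiv.ofBijective (fun t => ⟨mkNC m hm t.1 t.2.1, ?_⟩) ⟨?_, ?_⟩)
  · exact ⟨(ncArea_mkB t.2.1).trans t.2.2.1, (leap_mkB t.2.1).trans t.2.2.2⟩
  · intro t t' e
    apply Subtype.ext
    apply toQuad_inj t.2.1 t'.2.1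
    rw [← blockQuad_mkB t.2.1, ← blockQuad_mkB t'.2.1, ← mkNC_blocks m hm t.1 t.2.1,
      ← mkNC_blocks m hm t'.1 t'.2.1]
    exact congrArg (fun z => blockQuad z.1.1.blocks) e
  · rintro ⟨⟨P, hP, hc⟩, h1, h2⟩
    obtain ⟨t, ht, e⟩ := ns_exists P hP (hc.trans (by omega))
    have e' : P.blocks = mkB (m + 2) (nsS t) := by rw [← e]; exact blocks_eq_mkB P
    refine ⟨⟨t, ht, ?_, ?_⟩, ?_⟩
    · rw [← ncArea_mkB ht, ← e']; exact h1
    · rw [← leap_mkB ht, ← e']; exact h2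
    · apply Subtype.ext
      apply Subtype.ext
      exact sp_ext e'.symm

/-- The pair (area, leap) is a combinatorial interpretation of `N_{n,3}(q,t)`:
for all `n ≥ 3` and `u v`, the number of `π ∈ NC(n,3)` with `area π = u` and
`leap π = v` equals the number of `P ∈ PP(n-2,3)` with `area P = u`, `bounce P = v`. -/
theorem area_leap_pair (n u v : ℕ) (hn : 3 ≤ n) :
    Nat.card {π : NC n 3 // ncArea π.val.blocks = u ∧ leap π.val.blocks = v} =
    Nat.card {P : Polyomino (n - 2) 3 // area P = u ∧ bounce P = v} := by
  obtain ⟨m, rfl⟩ : ∃ m, n = m + 2 := ⟨n - 2, by omega⟩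
  have hm : 1 ≤ m := by omega
  exact (nc_card m u v hm).trans ((param_card m u v).trans (poly_card m u v hm))

end QtN
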